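/- In the constructed linearization E' of any execution of the shared-memory Bracha reliable broadcast algorithm, for every broadcast_i(ts,v) appearing in E' there is no broadcast_i(ts,w) in E' with w ≠ v; that is, each process broadcasts at most one value per timestamp in E'. -/

import Mathlib

/-! Two values broadcast by `i` with timestamp `ts` in the linearization both appear, with valid
proofs, in deliver registers of correct processes (`bcast_lin`). Each proof has `f + 1` signers,
hence a correct one, which really became ready for its value (`BrachaExec.exists_correct_ready`).
Two correct processes cannot be ready for conflicting values
(`BrachaExec.ready_agree`): each writes its own echo before collecting all echo registers, so the
one that echoes last sees the echo of the other. -/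

set_option autoImplicit false

/-! ## Executions of the shared-memory Bracha reliable broadcast algorithm
(Algorithm 1)

Each process `i` has SWMR registers `send_i`, `echo_i`, `ready_i`, `deliver_i` and a
PKI with unforgeable signatures.  `broadcast(ts,val)` writes `⟨ts,val⟩_i` to `send_i`
and repeatedly calls `deliver(i,ts)` until it returns non-`⊥`.  `refresh()`, invoked
infinitely often by every correct process, reads each `send_j`; for each properly
signed pair `m` it adds `⟨m⟩_i` to `echo_i`; if no conflicting value (same sender
and timestamp, different value) appears in any process's echo register it adds
`⟨ready,m⟩_i` to `ready_i`; and if `f+1` ready registers contain `⟨ready,m⟩` and a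
re-read of all echo registers still shows no conflicting value, it adds `⟨m,σ⟩`
(`σ` a set of `f+1` ready signatures) to `deliver_i`.  `deliver(j,ts)` calls
`refresh()` and, if some process's deliver register contains `⟨⟨ts,v⟩_j,σ⟩` with a
valid set `σ` of `f+1` signatures on `⟨ready,⟨ts,v⟩_j⟩`, copies it to `deliver_i`
and returns `v`; otherwise it returns `⊥`.

The structure below records, for an arbitrary execution, the (time-indexed) contents
of all registers together with the protocol rules that correct processes obey and
the guarantees of unforgeable signatures. -/

structure BrachaExec (n f : ℕ) (V : Type) where
  /-- the set of correct processes -/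
  Correct : ℕ → Prop
  /-- at most `f` of the `n` processes are Byzantine -/
  byz_bound : ∃ B : Finset ℕ, B.card ≤ f ∧ ∀ p, p < n → ¬ Correct p → p ∈ B
  /-- `echoR t k j ts v`: at time `t`, the signed pair `⟨ts,v⟩_j` (validly signed by
  `j`) appears in register `echo_k` -/
  echoR : ℕ → ℕ → ℕ → ℕ → V → Prop
  /-- `readyR t k j ts v`: at time `t`, `⟨ready,⟨ts,v⟩_j⟩_k` (validly signed by `k`)
  appears in register `ready_k` -/
  readyR : ℕ → ℕ → ℕ → ℕ → V → Prop
  /-- `deliverR t k j ts v σ`: at time `t`, the tuple `⟨⟨ts,v⟩_j,σ⟩` appears in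
  register `deliver_k`, where `σ` is a valid set of signatures on
  `⟨ready,⟨ts,v⟩_j⟩` by the processes in `σ` -/
  deliverR : ℕ → ℕ → ℕ → ℕ → V → Finset ℕ → Prop
  /-- values in echo registers of correct processes are never deleted -/
  echo_mono : ∀ t t' k j ts v, Correct k → t ≤ t' → echoR t k j ts v → echoR t' k j ts v
  /-- values in ready registers of correct processes are never deleted -/
  ready_mono : ∀ t t' k j ts v, Correct k → t ≤ t' → readyR t k j ts v → readyR t' k j ts v
  /-- values in deliver registers of correct processes are never deleted -/
  deliver_mono : ∀ t t' k j ts v σ, Correct k → t ≤ t' →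
      deliverR t k j ts v σ → deliverR t' k j ts v σ
  /-- a correct process `k` adds `⟨ready,m⟩_k` to `ready_k` only after writing `m`
  to its own echo register and then performing a collect of *all* echo registers in
  which no conflicting value (same sender and timestamp, different value) appears -/
  ready_rule : ∀ t k j ts v, Correct k → readyR t k j ts v →
      ∃ te, te ≤ t ∧ echoR te k j ts v ∧
        ∀ p, p < n → ∃ tr, te ≤ tr ∧ tr ≤ t ∧ ∀ w, echoR tr p j ts w → w = v
  /-- entries in the deliver register of a correct process carry a valid proof:
  `σ` contains `f+1` processes, and (by unforgeability of signatures) every correct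
  process in `σ` has really signed `⟨ready,⟨ts,v⟩_j⟩`, i.e. added it to its ready
  register -/
  deliver_rule : ∀ t k j ts v σ, Correct k → deliverR t k j ts v σ →
      f + 1 ≤ σ.card ∧ (∀ p ∈ σ, p < n) ∧
      ∀ p ∈ σ, Correct p → ∃ tp, tp ≤ t ∧ readyR tp p j ts v

/-- `E.FirstDel j ts v u`: time `u` is the first time at which some correct
process's deliver register contains `⟨⟨ts,v⟩_j,σ⟩` (for some valid signature set `σ`). -/
def BrachaExec.FirstDel {n f : ℕ} {V : Type} (E : BrachaExec n f V)
    (j ts : ℕ) (v : V) (u : ℕ) : Prop :=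
  (∃ k σ, k < n ∧ E.Correct k ∧ E.deliverR u k j ts v σ) ∧
  ∀ u', u' < u → ¬ ∃ k σ, k < n ∧ E.Correct k ∧ E.deliverR u' k j ts v σ

/-- An operation of the constructed sequential history `E'`:
`bcast p ts v` is a `broadcast(ts,v)` operation by process `p`, and
`deliv p j ts r` is a `deliver(j,ts)` operation by process `p` returning `r`. -/
inductive RBSeqOp (V : Type) where
  | bcast (p ts : ℕ) (v : V)
  | deliv (p j ts : ℕ) (r : Option V)

/-- The linearization `E'` constructed (Section 6.3) from an execution of the
shared-memory Bracha algorithm.  `e` enumerates the operations of `E'` in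
linearization order (`e a = none` for unused indices).  `τ a` is the linearization
point (a time of the execution) of the `a`-th operation, and `pr a` is a tie-break
priority; the order of `E'` is consistent with the lexicographic order of
`(τ, pr)`.  As in the construction:
* every `broadcast(ts,v)` operation of `E'` (a completed broadcast of a correct
  process, or a broadcast added for a Byzantine process) linearizes (immediately
  before) the first time a correct process adds `⟨⟨ts,v⟩_j,σ⟩` to its deliver
  register;
* every `deliver` operation returning `v ≠ ⊥` linearizes when the delivered tuple
  is first read from, or written to, a correct process's deliver register — hence
  no earlier than that first write;
* every `deliver` operation returning `⊥` linearizes at its invocation, at which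
  point its (subsequent) check of the deliver registers finds no valid tuple;
* for every `deliver(j,ts)` operation of `E'` returning `v ≠ ⊥`, `E'` contains a
  `broadcast(ts,v)` operation by `j`. -/
structure RBLin (n f : ℕ) (V : Type) extends BrachaExec n f V where
  e : ℕ → Option (RBSeqOp V)
  τ : ℕ → ℕ
  pr : ℕ → ℕ
  /-- the order of `E'` is consistent with the linearization points -/
  ord : ∀ a b, (e a).isSome → (e b).isSome → a < b →
      τ a ≤ τ b ∧ (τ a = τ b → pr a ≤ pr b)
  /-- broadcast operations linearize (immediately before) the first write of their
  value to a correct process's deliver register -/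
  bcast_lin : ∀ a j ts v, e a = some (RBSeqOp.bcast j ts v) →
      pr a = 0 ∧ toBrachaExec.FirstDel j ts v (τ a)
  /-- deliver operations returning `v ≠ ⊥` linearize no earlier than the first
  write of `⟨⟨ts,v⟩_j,σ⟩` to a correct process's deliver register -/
  deliv_lin : ∀ a p j ts v, e a = some (RBSeqOp.deliv p j ts (some v)) →
      pr a = 1 ∧ ∃ u, u ≤ τ a ∧ toBrachaExec.FirstDel j ts v u
  /-- for each value `v` returned by a `deliver(j,ts)` of `E'`, the history `E'`
  contains a `broadcast(ts,v)` operation by `j` (added for Byzantine `j`,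
  or the genuine broadcast of correct `j` by unforgeability of signatures) -/
  bcast_exists : ∀ a p j ts v, e a = some (RBSeqOp.deliv p j ts (some v)) →
      ∃ b, e b = some (RBSeqOp.bcast j ts v)
  /-- a deliver operation returning `⊥` linearizes at its invocation; its check of
  the deliver registers, performed at some later time `tc`, finds no valid tuple
  for `(j,ts)` in the deliver register of any correct process -/
  deliv_none : ∀ a p j ts, e a = some (RBSeqOp.deliv p j ts none) →
      ∃ tc, τ a ≤ tc ∧ ∀ (v : V) (k : ℕ) (σ : Finset ℕ), k < n → Correct k →
        ¬ deliverR tc k j ts v σ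

namespace BrachaExec

variable {n f : ℕ} {V : Type} (E : BrachaExec n f V)

/-- A proof of delivery has more signers than there are Byzantine processes, so a correct process
was ready for every value in a correct deliver register. -/
theorem exists_correct_ready {t k j ts : ℕ} {v : V} {σ : Finset ℕ}
    (hk : E.Correct k) (hd : E.deliverR t k j ts v σ) :
    ∃ p tp, p < n ∧ E.Correct p ∧ E.readyR tp p j ts v := by
  obtain ⟨hcard, hlt, hready⟩ := E.deliver_rule t k j ts v σ hk hd
  obtain ⟨B, hB, hbyz⟩ := E.byz_bound
  obtain ⟨p, hpσ, hpB⟩ : ∃ p ∈ σ, p ∉ B :=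
    Finset.exists_mem_notMem_of_card_lt_card (by omega)
  have hp : E.Correct p := by
    by_contra h
    exact hpB (hbyz p (hlt p hpσ) h)
  obtain ⟨tp, -, htp⟩ := hready p hpσ hp
  exact ⟨p, tp, hlt p hpσ, hp, htp⟩

theorem ready_agree {p q tp tq j ts : ℕ} {v w : V}
    (hpn : p < n) (hqn : q < n) (hp : E.Correct p) (hq : E.Correct q)
    (hv : E.readyR tp p j ts v) (hw : E.readyR tq q j ts w) : v = w := by
  obtain ⟨ep, -, hep, collp⟩ := E.ready_rule tp p j ts v hp hv
  obtain ⟨eq, -, heq, collq⟩ := E.ready_rule tq q j ts w hq hw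
  -- The process whose echo came last reads the other's echo register after both echoes.
  rcases le_total ep eq with h | h
  · obtain ⟨tr, htr, -, hr⟩ := collq p hpn
    exact hr v (E.echo_mono ep tr p j ts v hp (h.trans htr) hep)
  · obtain ⟨tr, htr, -, hr⟩ := collp q hqn
    exact (hr w (E.echo_mono eq tr q j ts w hq (h.trans htr) heq)).symm

end BrachaExec

/-- **Lemma 6.5.** In the constructed linearization `E'` of any execution of the
shared-memory Bracha reliable broadcast algorithm (with `n > 2f`), for every
`broadcast_i(ts,v)` appearing in `E'` there is no `broadcast_i(ts,w)` in `E'` with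
`w ≠ v`; that is, each process broadcasts at most one value per timestamp in `E'`. -/
theorem broadcast_unique_per_timestamp
    (n f : ℕ) (hn : 2 * f < n) (V : Type) (L : RBLin n f V)
    (a a' i ts : ℕ) (v w : V)
    (ha : L.e a = some (RBSeqOp.bcast i ts v))
    (ha' : L.e a' = some (RBSeqOp.bcast i ts w)) :
    v = w := by
  obtain ⟨-, ⟨k, σ, -, hk, hd⟩, -⟩ := L.bcast_lin a i ts v ha
  obtain ⟨-, ⟨k', σ', -, hk', hd'⟩, -⟩ := L.bcast_lin a' i ts w ha'
  obtain ⟨p, tp, hpn, hp, hv⟩ := L.exists_correct_ready hk hd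
  obtain ⟨q, tq, hqn, hq, hw⟩ := L.exists_correct_ready hk' hd'
  exact L.ready_agree hpn hqn hp hq hv hw
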